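/- arXiv:0905.2533 — 5 statements merged into one kernel-verified Lean document; each statement's English description precedes it below -/
import Mathlib

section
/- Let f : [0,∞) → ℝ be a twice continuously differentiable function satisfying the initial value problem f(r)·f''(r) = 1 for all r ≥ 0, with f(0) = 1 and f'(0) = 0. Then f(r) > 0 and f''(r) > 0 for all r ≥ 0, f'(r) > 0 for all r > 0 (so f is strictly increasing on [0,∞)), and f'' is strictly decreasing on [0,∞) (so h := f' is strictly concave). -/
/-!
The equation `f * f'' = 1` keeps `f` from vanishing, so by the intermediate value theorem `f` keeps
the sign of `f 0 = 1`, and `f'' = 1 / f` is positive. Hence `f'` increases strictly from `f' 0 = 0`,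
so `f' > 0` on `(0, ∞)` and `f` is strictly increasing; its reciprocal `f''` is therefore strictly
decreasing, so `f'` is strictly concave on the half-line.
-/

/-- The solution of the initial value problem `f·f'' = 1`, `f(0) = 1`, `f'(0) = 0`
on `[0,∞)` satisfies `f > 0`, `f'' > 0`, `f' > 0` for `r > 0` (so `f` is strictly
increasing on `[0,∞)`), and `f''` is strictly decreasing on `[0,∞)`
(so `h := f'` is strictly concave). -/
theorem stmt0 (f f' f'' : ℝ → ℝ)
    (hf' : ∀ r ∈ Set.Ici (0:ℝ), HasDerivWithinAt f (f' r) (Set.Ici 0) r)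
    (hf'' : ∀ r ∈ Set.Ici (0:ℝ), HasDerivWithinAt f' (f'' r) (Set.Ici 0) r)
    (hcont : ContinuousOn f'' (Set.Ici 0))
    (hode : ∀ r ∈ Set.Ici (0:ℝ), f r * f'' r = 1)
    (hf0 : f 0 = 1) (hf'0 : f' 0 = 0) :
    (∀ r ∈ Set.Ici (0:ℝ), 0 < f r) ∧
    (∀ r ∈ Set.Ici (0:ℝ), 0 < f'' r) ∧
    (∀ r : ℝ, 0 < r → 0 < f' r) ∧
    StrictMonoOn f (Set.Ici 0) ∧
    StrictAntiOn f'' (Set.Ici 0) ∧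
    StrictConcaveOn ℝ (Set.Ici 0) f' := by
  have cf : ContinuousOn f (Set.Ici 0) := fun r hr => (hf' r hr).continuousWithinAt
  have cf' : ContinuousOn f' (Set.Ici 0) := fun r hr => (hf'' r hr).continuousWithinAt
  have df : ∀ r : ℝ, 0 < r → deriv f r = f' r := fun r hr =>
    ((hf' r hr.le).hasDerivAt (Ici_mem_nhds hr)).deriv
  have df' : ∀ r : ℝ, 0 < r → deriv f' r = f'' r := fun r hr =>
    ((hf'' r hr.le).hasDerivAt (Ici_mem_nhds hr)).deriv
  have hpos : ∀ r ∈ Set.Ici (0:ℝ), 0 < f r := by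
    intro r hr
    by_contra! hle
    have hmem : (0:ℝ) ∈ Set.Icc (f r) (f 0) := ⟨hle, by rw [hf0]; exact zero_le_one⟩
    obtain ⟨c, hc, hc0⟩ :=
      intermediate_value_Icc' hr (cf.mono Set.Icc_subset_Ici_self) hmem
    have h1 := hode c hc.1
    rw [hc0, zero_mul] at h1
    exact zero_ne_one h1
  have hpos'' : ∀ r ∈ Set.Ici (0:ℝ), 0 < f'' r := fun r hr =>
    pos_of_mul_pos_right (by rw [hode r hr]; exact one_pos) (hpos r hr).le
  have mono' : StrictMonoOn f' (Set.Ici 0) := by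
    refine strictMonoOn_of_deriv_pos (convex_Ici 0) cf' fun r hr => ?_
    rw [interior_Ici] at hr
    rw [df' r hr]
    exact hpos'' r (Set.Ioi_subset_Ici_self hr)
  have hpos' : ∀ r : ℝ, 0 < r → 0 < f' r := fun r hr => by
    simpa [hf'0] using mono' Set.self_mem_Ici (Set.mem_Ici.2 hr.le) hr
  have mono : StrictMonoOn f (Set.Ici 0) := by
    refine strictMonoOn_of_deriv_pos (convex_Ici 0) cf fun r hr => ?_
    rw [interior_Ici] at hr
    rw [df r hr]
    exact hpos' r hr
  have anti : StrictAntiOn f'' (Set.Ici 0) := by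
    intro a ha b hb hab
    rw [eq_inv_of_mul_eq_one_right (hode a ha), eq_inv_of_mul_eq_one_right (hode b hb)]
    exact inv_strictAnti₀ (hpos a ha) (mono ha hb hab)
  refine ⟨hpos, hpos'', hpos', mono, anti, ?_⟩
  refine StrictAntiOn.strictConcaveOn_of_deriv (convex_Ici 0) cf' ?_
  rw [interior_Ici]
  intro a ha b hb hab
  rw [df' a ha, df' b hb]
  exact anti (Set.Ioi_subset_Ici_self ha) (Set.Ioi_subset_Ici_self hb) hab
end

section
/- Let f : [0,∞) → ℝ be a twice continuously differentiable function with f(r)·f''(r) = 1 for all r ≥ 0, f(0) = 1, f'(0) = 0, and f > 0 on [0,∞). Then f(r) → ∞ as r → ∞, and for every k > 0 and α ≥ 0, the ratio f'(r) / (k·(f(r) + α)) tends to 0 as r → ∞. -/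
/-!
Since `f'' = 1 / f > 0`, the derivative `f'` is strictly increasing from `0`; hence `f ≥ 1` and
`f` grows at least linearly with slope `f' 1 > 0`, so `f → ∞`.  The conserved quantity
`f' ^ 2 / 2 - log f` suggests the cruder bound `f' ^ 2 ≤ 2 f`: the function `2 f - f' ^ 2` has
derivative `2 f' (1 - 1 / f) ≥ 0` and starts at `2`.  Thus `f' / f ≤ 2 / √f → 0`.
-/

/-- Monotonicity on a half-line inside `[0, ∞)` from a nonnegative one-sided derivative. -/
lemma monotoneOn_Ici_of_deriv_nonneg {g g' : ℝ → ℝ} {a : ℝ} (ha : 0 ≤ a)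
    (hg : ∀ r ∈ Set.Ici (0:ℝ), HasDerivWithinAt g (g' r) (Set.Ici 0) r)
    (hnonneg : ∀ r, a ≤ r → 0 ≤ g' r) : MonotoneOn g (Set.Ici a) := by
  have hsub : Set.Ici a ⊆ Set.Ici (0:ℝ) := Set.Ici_subset_Ici.2 ha
  refine monotoneOn_of_hasDerivWithinAt_nonneg (f' := g') (convex_Ici a)
    (fun r hr => (hg r (hsub hr)).continuousWithinAt.mono hsub)
    (fun r hr => (hg r (hsub (interior_subset hr))).mono (interior_subset.trans hsub))
    (fun r hr => hnonneg r (interior_subset hr))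

/-- For the solution of `f·f'' = 1`, `f(0) = 1`, `f'(0) = 0` with `f > 0` on `[0,∞)`:
`f(r) → ∞` as `r → ∞`, and for every `k > 0` and `α ≥ 0` the ratio
`f'(r)/(k·(f(r)+α))` tends to `0` as `r → ∞`. -/
theorem stmt2 (f f' f'' : ℝ → ℝ)
    (hf' : ∀ r ∈ Set.Ici (0:ℝ), HasDerivWithinAt f (f' r) (Set.Ici 0) r)
    (hf'' : ∀ r ∈ Set.Ici (0:ℝ), HasDerivWithinAt f' (f'' r) (Set.Ici 0) r)
    (hcont : ContinuousOn f'' (Set.Ici 0))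
    (hode : ∀ r ∈ Set.Ici (0:ℝ), f r * f'' r = 1)
    (hf0 : f 0 = 1) (hf'0 : f' 0 = 0)
    (hpos : ∀ r ∈ Set.Ici (0:ℝ), 0 < f r) :
    Filter.Tendsto f Filter.atTop Filter.atTop ∧
    ∀ k : ℝ, 0 < k → ∀ α : ℝ, 0 ≤ α →
      Filter.Tendsto (fun r => f' r / (k * (f r + α))) Filter.atTop (nhds 0) := by
  have hf''pos : ∀ r, 0 ≤ r → 0 < f'' r := fun r hr =>
    pos_of_mul_pos_right (by rw [hode r hr]; exact one_pos) (hpos r hr).le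
  have hf'mono : StrictMonoOn f' (Set.Ici 0) :=
    strictMonoOn_of_hasDerivWithinAt_pos (f' := f'') (convex_Ici 0)
      (fun r hr => (hf'' r hr).continuousWithinAt)
      (fun r hr => (hf'' r (interior_subset hr)).mono interior_subset)
      (fun r hr => hf''pos r (interior_subset hr))
  have hf'nonneg : ∀ r, 0 ≤ r → 0 ≤ f' r := fun r hr => by
    rw [← hf'0]
    exact hf'mono.monotoneOn Set.self_mem_Ici hr hr
  have hf'1 : 0 < f' 1 := by
    rw [← hf'0]
    exact hf'mono Set.self_mem_Ici (Set.mem_Ici.2 zero_le_one) one_pos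
  have hfge : ∀ r, 0 ≤ r → 1 ≤ f r := fun r hr => by
    rw [← hf0]
    exact monotoneOn_Ici_of_deriv_nonneg le_rfl hf' hf'nonneg Set.self_mem_Ici hr hr
  have hlin : ∀ r, 1 ≤ r → f' 1 * (r - 1) ≤ f r := fun r hr => by
    have hm : MonotoneOn (fun r => f r - f' 1 * r) (Set.Ici 1) := by
      refine monotoneOn_Ici_of_deriv_nonneg (g' := fun r => f' r - f' 1 * 1) zero_le_one
        (fun r hr => (hf' r hr).sub ((hasDerivWithinAt_id r _).const_mul (f' 1))) fun r hr => ?_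
      have := hf'mono.monotoneOn (Set.mem_Ici.2 zero_le_one)
        (Set.mem_Ici.2 (zero_le_one.trans hr)) hr
      linarith
    have h := hm Set.self_mem_Ici hr hr
    have h1 := hfge 1 zero_le_one
    simp only at h
    linarith
  have htop : Filter.Tendsto f Filter.atTop Filter.atTop := by
    refine Filter.tendsto_atTop_mono' _ ?_
      ((Filter.tendsto_atTop_add_const_right _ (-1) Filter.tendsto_id).const_mul_atTop hf'1)
    filter_upwards [Filter.eventually_ge_atTop 1] with r hr using hlin r hr
  refine ⟨htop, fun k hk α hα => ?_⟩
  have hsq : ∀ r, 0 ≤ r → f' r ^ 2 ≤ 2 * f r := fun r hr => by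
    have hm : MonotoneOn (fun r => 2 * f r - f' r * f' r) (Set.Ici 0) := by
      refine monotoneOn_Ici_of_deriv_nonneg
        (g' := fun r => 2 * f' r - (f'' r * f' r + f' r * f'' r)) le_rfl
        (fun r hr => ((hf' r hr).const_mul 2).sub ((hf'' r hr).mul (hf'' r hr))) fun r hr => ?_
      have h1 : f'' r ≤ 1 := by nlinarith [hode r hr, hfge r hr, hf''pos r hr]
      nlinarith [mul_nonneg (hf'nonneg r hr) (sub_nonneg.2 h1)]
    have h := hm Set.self_mem_Ici hr hr
    simp only [hf0, hf'0] at h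
    nlinarith
  have hlim : Filter.Tendsto (fun r => 2 / k * (√(f r))⁻¹) Filter.atTop (nhds 0) := by
    simpa using (tendsto_inv_atTop_zero.comp (Real.tendsto_sqrt_atTop.comp htop)).const_mul (2 / k)
  refine tendsto_of_tendsto_of_tendsto_of_le_of_le' tendsto_const_nhds hlim ?_ ?_
  · filter_upwards [Filter.eventually_ge_atTop 0] with r hr
    have := hpos r hr
    have := hf'nonneg r hr
    positivity
  · filter_upwards [Filter.eventually_ge_atTop 0] with r hr
    have hfr := hpos r hr
    have hs : 0 < √(f r) := Real.sqrt_pos.2 hfr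
    have hss : √(f r) ^ 2 = f r := Real.sq_sqrt hfr.le
    have hb : f' r ≤ 2 * √(f r) := by
      refine abs_le_of_sq_le_sq' ?_ (by positivity) |>.2
      nlinarith [hsq r hr]
    calc f' r / (k * (f r + α)) ≤ 2 * √(f r) / (k * f r) := by
          gcongr
          linarith
      _ = 2 / k * (√(f r))⁻¹ := by
          rw [← hss, Real.sqrt_sq hs.le]
          field_simp
end

section
/- Let n be a natural number with n ≥ 3, and let λ ≥ 0, μ > 0, c > 0 be real numbers satisfying c²·λ + c·((n−2) + μ·λ) < (n−2)·μ. Then c < μ, and for all real numbers x ≥ μ, all y with |y| ≤ λ, all τ ∈ [0,1], and all real d: c·y·((1−τ)·x + τ·c) + (n−2)·(x − c) + (n−2)·c·(1−τ)·d² > 0. -/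
/-!
Write `m = n - 2 > 0`. The hypothesis gives `m * c < m * mu` and `c * lam * mu < m * mu`, hence
`c < mu` and `c * lam < m`. Since `c < x`, the convex combination `(1 - τ) * x + τ * c` lies in
`[0, x]`, so the bracket is at least `-c * lam * x + m * (x - c) = (m - c * lam) * x - m * c`.
This is increasing in `x`, and at `x = mu` it exceeds `c ^ 2 * lam ≥ 0` by hypothesis.
-/

/-- Quantitative core of Lemma 5: if `c²λ + c((n−2) + μλ) < (n−2)μ` with `n ≥ 3`,
`λ ≥ 0`, `μ > 0`, `c > 0`, then `c < μ`, and the bracket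
`c·y·((1−τ)x + τc) + (n−2)(x−c) + (n−2)c(1−τ)d²` is positive for all
`x ≥ μ`, `|y| ≤ λ`, `τ ∈ [0,1]`, `d ∈ ℝ`. -/
theorem stmt5 (n : ℕ) (hn : 3 ≤ n) (lam mu c : ℝ)
    (hlam : 0 ≤ lam) (hmu : 0 < mu) (hc : 0 < c)
    (hineq : c ^ 2 * lam + c * (((n : ℝ) - 2) + mu * lam) < ((n : ℝ) - 2) * mu) :
    c < mu ∧
    ∀ x : ℝ, mu ≤ x → ∀ y : ℝ, |y| ≤ lam → ∀ τ ∈ Set.Icc (0:ℝ) 1, ∀ d : ℝ,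
      0 < c * y * ((1 - τ) * x + τ * c) + ((n : ℝ) - 2) * (x - c)
        + ((n : ℝ) - 2) * c * (1 - τ) * d ^ 2 := by
  have hm : (0 : ℝ) < (n : ℝ) - 2 := by
    have : (3 : ℝ) ≤ n := by exact_mod_cast hn
    linarith
  generalize (n : ℝ) - 2 = m at *
  have h1 : 0 ≤ c ^ 2 * lam := by positivity
  have h2 : 0 ≤ c * (mu * lam) := by positivity
  have hcmu : c < mu := lt_of_mul_lt_mul_left (by linarith : m * c < m * mu) hm.le
  have hclam : c * lam < m := by
    have h3 : 0 < m * c := by positivity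
    exact lt_of_mul_lt_mul_right (by linarith : c * lam * mu < m * mu) hmu.le
  refine ⟨hcmu, fun x hx y hy τ hτ d => ?_⟩
  obtain ⟨hτ0, hτ1⟩ := hτ
  have hσ : 0 ≤ 1 - τ := by linarith
  have hx0 : 0 < x := by linarith
  have hd : 0 ≤ m * c * (1 - τ) * d ^ 2 := by positivity
  have hz0 : 0 ≤ (1 - τ) * x + τ * c := by positivity
  have hzx : (1 - τ) * x + τ * c ≤ x := by
    linarith [mul_nonneg hτ0 (by linarith : 0 ≤ x - c)]
  generalize (1 - τ) * x + τ * c = z at *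
  have hyz : 0 ≤ c * (y + lam) * z :=
    mul_nonneg (mul_nonneg hc.le (by linarith [(abs_le.mp hy).1])) hz0
  have hlz : 0 ≤ c * lam * (x - z) := mul_nonneg (by positivity) (by linarith)
  have hmono : 0 ≤ (m - c * lam) * (x - mu) := mul_nonneg (by linarith) (by linarith)
  linarith
end

section
/- Let n be a natural number, and let x, d, y, c be real numbers with x > 0 and c > 0. Suppose that for every τ ∈ [0,1]: c·y·((1−τ)·x + τ·c) + (n−2)·(x − c) + (n−2)·c·(1−τ)·d² > 0. Then the function F(τ) := −2·(1−τ)·y / ((1−τ)·x + τ·c) + (n−2)·(1 − ((1−τ)·d)²) / ((1−τ)·x + τ·c)² is strictly increasing on [0,1]. -/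
/-!
Write `u = (1 - τ) * x + τ * c`, which is positive on `[0, 1]` and has derivative `c - x`.
Since `u + (1 - τ) * (c - x) = c`, the quotient rule shows that the derivative of the function
in question is exactly `2 / u ^ 3` times the bracket assumed positive, so the function is strictly
increasing by the mean value theorem.
-/

/-- Monotonicity conclusion in the proof of Lemma 4: if the bracket
`c·y·((1−τ)x + τc) + (n−2)(x−c) + (n−2)c(1−τ)d²` is positive for every
`τ ∈ [0,1]`, then
`F(τ) = −2(1−τ)y/((1−τ)x+τc) + (n−2)(1−((1−τ)d)²)/((1−τ)x+τc)²`
is strictly increasing on `[0,1]`. -/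
theorem stmt8 (n : ℕ) (x d y c : ℝ) (hx : 0 < x) (hc : 0 < c)
    (hbr : ∀ τ ∈ Set.Icc (0:ℝ) 1,
      0 < c * y * ((1 - τ) * x + τ * c) + ((n : ℝ) - 2) * (x - c)
        + ((n : ℝ) - 2) * c * (1 - τ) * d ^ 2) :
    StrictMonoOn
      (fun τ : ℝ => -2 * (1 - τ) * y / ((1 - τ) * x + τ * c)
        + ((n : ℝ) - 2) * (1 - ((1 - τ) * d) ^ 2) / ((1 - τ) * x + τ * c) ^ 2)
      (Set.Icc (0:ℝ) 1) := by
  have hu : ∀ τ ∈ Set.Icc (0:ℝ) 1, 0 < (1 - τ) * x + τ * c := by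
    rintro τ ⟨h0, h1⟩
    rcases h0.eq_or_lt with rfl | h0
    · simpa using hx
    · have := mul_nonneg (sub_nonneg.2 h1) hx.le
      have := mul_pos h0 hc
      linarith
  have hder : ∀ τ ∈ Set.Icc (0:ℝ) 1, HasDerivAt
      (fun τ : ℝ => -2 * (1 - τ) * y / ((1 - τ) * x + τ * c)
        + ((n : ℝ) - 2) * (1 - ((1 - τ) * d) ^ 2) / ((1 - τ) * x + τ * c) ^ 2)
      (2 / ((1 - τ) * x + τ * c) ^ 3 *
        (c * y * ((1 - τ) * x + τ * c) + ((n : ℝ) - 2) * (x - c)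
        + ((n : ℝ) - 2) * c * (1 - τ) * d ^ 2)) τ := by
    intro τ hτ
    have hne := (hu τ hτ).ne'
    have h1 : HasDerivAt (fun τ : ℝ => 1 - τ) (-1) τ := by
      simpa using (hasDerivAt_id τ).const_sub 1
    have h2 : HasDerivAt (fun τ : ℝ => (1 - τ) * x + τ * c) (-1 * x + 1 * c) τ :=
      (h1.mul_const x).add ((hasDerivAt_id τ).mul_const c)
    have h3 := (((h1.const_mul (-2)).mul_const y).fun_div h2 hne).fun_add
      (((((h1.mul_const d).fun_pow 2).const_sub 1).const_mul ((n : ℝ) - 2)).fun_div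
        (h2.fun_pow 2) (pow_ne_zero 2 hne))
    refine h3.congr_deriv ?_
    field_simp
    push_cast
    ring
  refine strictMonoOn_of_deriv_pos (convex_Icc 0 1)
    (fun τ hτ => (hder τ hτ).continuousAt.continuousWithinAt) fun τ hτ => ?_
  have hτ' := interior_subset hτ
  rw [(hder τ hτ').deriv]
  exact mul_pos (div_pos two_pos (pow_pos (hu τ hτ') 3)) (hbr τ hτ')
end

section
/- Let n ≥ 3 and m ≥ 1 be natural numbers, and let h, c, d, y, p, q, z be real numbers with h > c > 0, d ≥ 0 (d plays the role of h'), y ≤ 0 (y plays the role of h''), p > 0 (the value ψ), q ≥ 0 (the value ψ'), and z ∈ ℝ (the value ψ''). For τ ∈ [0,1] set h_τ = (1−τ)·h + τ·c and define S(τ) := −2(n−1)·(1−τ)·y / h_τ − 2m·z / p + (n−1)(n−2)·(1 − ((1−τ)·d)²) / h_τ² + m(m−1)·(1 − q²) / p² − 2(n−1)·m·(1−τ)·d·q / (h_τ·p). Suppose S(0) > 0 and that for every τ ∈ [0,1]: c·y·h_τ + (n−2)·(h − c) + (n−2)·c·(1−τ)·d² > 0. Then S(τ) > 0 for every τ ∈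 [0,1]. -/
/-!
The derivative formula for `S` integrates to a closed form: writing `H = h_τ` and `B(τ)` for the
bracket, one has the exact identity
`S(τ) - S(0) = (n-1) τ (H B(0) + h B(τ)) / (h² H²) + 2 (n-1) m d q c τ / (h H p)`.
The first summand collects the terms in `h''`, `1 / h²` and `(h')²`; the second is the decrease of
the mixed term `h_τ' ψ' / (h_τ ψ)`. Both are nonnegative, so `S(τ) ≥ S(0) > 0`.
-/

/-- Analytic heart of Lemma 4: the scalar curvature `S(τ)` of the doubly
warped product along the deformation `h_τ = (1−τ)h + τc` stays positive on
`[0,1]` provided `S(0) > 0` and the bracket from the derivative formula (†)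
is positive for all `τ ∈ [0,1]`. -/
theorem stmt9 (n m : ℕ) (hn : 3 ≤ n) (hm : 1 ≤ m)
    (h c d y p q z : ℝ)
    (hhc : c < h) (hc : 0 < c) (hd : 0 ≤ d) (hy : y ≤ 0)
    (hp : 0 < p) (hq : 0 ≤ q)
    (S : ℝ → ℝ)
    (hS : ∀ τ : ℝ, S τ =
      -2 * ((n : ℝ) - 1) * (1 - τ) * y / ((1 - τ) * h + τ * c)
      - 2 * (m : ℝ) * z / p
      + ((n : ℝ) - 1) * ((n : ℝ) - 2) * (1 - ((1 - τ) * d) ^ 2)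
          / ((1 - τ) * h + τ * c) ^ 2
      + (m : ℝ) * ((m : ℝ) - 1) * (1 - q ^ 2) / p ^ 2
      - 2 * ((n : ℝ) - 1) * (m : ℝ) * (1 - τ) * d * q
          / (((1 - τ) * h + τ * c) * p))
    (hS0 : 0 < S 0)
    (hbr : ∀ τ ∈ Set.Icc (0:ℝ) 1,
      0 < c * y * ((1 - τ) * h + τ * c) + ((n : ℝ) - 2) * (h - c)
        + ((n : ℝ) - 2) * c * (1 - τ) * d ^ 2) :
    ∀ τ ∈ Set.Icc (0:ℝ) 1, 0 < S τ := by
  rintro τ ⟨h0, h1⟩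
  have hh : 0 < h := hc.trans hhc
  have hH : 0 < (1 - τ) * h + τ * c := by
    nlinarith [mul_nonneg (sub_nonneg.2 h1) (sub_nonneg.2 hhc.le)]
  have hn1 : (0 : ℝ) ≤ (n : ℝ) - 1 := by
    have : (3 : ℝ) ≤ n := by exact_mod_cast hn
    linarith
  have b0 := hbr 0 ⟨le_rfl, zero_le_one⟩
  have b1 := hbr τ ⟨h0, h1⟩
  have key : S τ - S 0 =
      ((n : ℝ) - 1) * τ * (((1 - τ) * h + τ * c) *
          (c * y * ((1 - 0) * h + 0 * c) + ((n : ℝ) - 2) * (h - c)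
            + ((n : ℝ) - 2) * c * (1 - 0) * d ^ 2)
        + h * (c * y * ((1 - τ) * h + τ * c) + ((n : ℝ) - 2) * (h - c)
            + ((n : ℝ) - 2) * c * (1 - τ) * d ^ 2))
          / (h ^ 2 * ((1 - τ) * h + τ * c) ^ 2)
      + 2 * ((n : ℝ) - 1) * m * d * q * c * τ / (h * ((1 - τ) * h + τ * c) * p) := by
    rw [hS τ, hS 0]
    simp only [sub_zero, one_mul, zero_mul, add_zero, mul_one]
    -- `H` is kept atomic while denominators are cleared, and expanded only for `ring`.
    obtain ⟨H, hHd⟩ : ∃ H, H = (1 - τ) * h + τ * c := ⟨_, rfl⟩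
    rw [← hHd] at hH ⊢
    have hH' := hH.ne'
    field_simp
    rw [hHd]
    ring
  have i1 := mul_pos hH b0
  have i2 := mul_pos hh b1
  have hdiff : 0 ≤ S τ - S 0 := by
    rw [key]
    refine add_nonneg (div_nonneg ?_ (by positivity)) (by positivity)
    exact mul_nonneg (mul_nonneg hn1 h0) (add_pos i1 i2).le
  linarith
end
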